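/- Let w be a weight on ℝ^d (d ≥ 1) such that w^{−1/(p₀−1)} is also a weight on ℝ^d for some p₀ > 1. Let 0 < p < ∞ and let F be a subset of L^p(w). If the following three conditions hold: (i) F is bounded, i.e. sup_{f∈F} ‖f‖_{L^p(w)} < ∞; (ii) F uniformly vanishes at infinity, i.e. lim_{N→∞} sup_{f∈F} ∫_{|x|>N} |f(x)|^p w(x) dx = 0; (iii) F is uniformly equicontinuous, i.e. lim_{|h|→0} sup_{f∈F} ∫_{ℝ^d} |f(x+h) − f(x)|^p w(x) dx = 0; then F is sequentially compact in L^p(w), i.e. every sequence in F has a subsequence that converges in the L^p(w) metric to an element of L^p(w). -/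

import Mathlib

open MeasureTheory Metric Filter ENNReal

noncomputable section

abbrev Ed (d : ℕ) := EuclideanSpace ℝ (Fin d)

/-- `V` belongs to the reverse Hölder class `B_q`: `V` is nonnegative, locally integrable,
and the reverse Hölder inequality with exponent `q` holds on every ball. -/
def ReverseHolderClass (d : ℕ) (V : Ed d → ℝ) (q : ℝ) : Prop :=
  (∀ x, 0 ≤ V x) ∧ LocallyIntegrable V volume ∧
    ∃ C : ℝ, 0 < C ∧ ∀ (x : Ed d) (r : ℝ), 0 < r →
      ((volume (ball x r)).toReal⁻¹ * ∫ y in ball x r, V y ^ q) ^ (1 / q) ≤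
        C * ((volume (ball x r)).toReal⁻¹ * ∫ y in ball x r, V y)

/-- The critical radius function `ρ(x)` associated with the potential `V`. -/
def critRad {d : ℕ} (V : Ed d → ℝ) (x : Ed d) : ℝ :=
  sSup {r : ℝ | 0 < r ∧ (∫ y in ball x r, V y) ≤ r ^ ((d : ℝ) - 2)}

/-- The auxiliary function `m_V = 1 / ρ`. -/
def mV {d : ℕ} (V : Ed d → ℝ) (x : Ed d) : ℝ := (critRad V x)⁻¹

/-- The factor `Ψ_θ(B)` of the ball with center `x₀` and radius `r`. -/
def psi {d : ℕ} (V : Ed d → ℝ) (θ : ℝ) (x₀ : Ed d) (r : ℝ) : ℝ :=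
  (1 + r * mV V x₀) ^ θ

/-- The weight class `A_p^{ρ,θ}` for `1 < p < ∞`. -/
def MemApRho (d : ℕ) (V : Ed d → ℝ) (θ p : ℝ) (w : Ed d → ℝ) : Prop :=
  (∀ x, 0 ≤ w x) ∧ LocallyIntegrable w volume ∧
    ∃ C : ℝ, 0 < C ∧ ∀ (x₀ : Ed d) (r : ℝ), 0 < r →
      ((psi V θ x₀ r * (volume (ball x₀ r)).toReal)⁻¹ * ∫ y in ball x₀ r, w y) *
        ((psi V θ x₀ r * (volume (ball x₀ r)).toReal)⁻¹ *
            ∫ y in ball x₀ r, w y ^ (-(1 / (p - 1)))) ^ (p - 1) ≤ C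

/-- The maximal operator `M_{V,η}` (built with the `Ψ_θ` factors), valued in `ℝ≥0∞`. -/
def maxV {d : ℕ} (V : Ed d → ℝ) (θ η : ℝ) (f : Ed d → ℝ) (x : Ed d) : ℝ≥0∞ :=
  ⨆ (x₀ : Ed d) (r : ℝ) (_ : 0 < r) (_ : x ∈ ball x₀ r),
    (ENNReal.ofReal (psi V θ x₀ r ^ η) * volume (ball x₀ r))⁻¹ *
      ∫⁻ y in ball x₀ r, ENNReal.ofReal ‖f y‖

/-- The weight class `A_1^{ρ,θ}`. -/
def MemA1Rho (d : ℕ) (V : Ed d → ℝ) (θ : ℝ) (w : Ed d → ℝ) : Prop :=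
  (∀ x, 0 ≤ w x) ∧ LocallyIntegrable w volume ∧
    ∃ C : ℝ, 0 < C ∧ ∀ᵐ x ∂volume, maxV V θ 1 w x ≤ ENNReal.ofReal (C * w x)

/-- The axis-parallel cube centered at `c` with side length `r`. -/
def cube {d : ℕ} (c : Ed d) (r : ℝ) : Set (Ed d) := {y | ∀ j, ‖y j - c j‖ ≤ r / 2}

/-- The set of normalized `BMO(ρ)`-averages of `b` over balls. -/
def bmoSet {d : ℕ} (V : Ed d → ℝ) (θ : ℝ) (b : Ed d → ℝ) : Set ℝ :=
  {s | ∃ (x₀ : Ed d) (r : ℝ), 0 < r ∧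
    s = (psi V θ x₀ r * (volume (ball x₀ r)).toReal)⁻¹ *
      ∫ x in ball x₀ r, ‖b x - (volume (ball x₀ r)).toReal⁻¹ * (∫ y in ball x₀ r, b y)‖}

/-- `b ∈ BMO(ρ)`. -/
def MemBMOrho {d : ℕ} (V : Ed d → ℝ) (θ : ℝ) (b : Ed d → ℝ) : Prop :=
  BddAbove (bmoSet V θ b)

/-- The `BMO(ρ)` norm of `b`. -/
def bmoNorm {d : ℕ} (V : Ed d → ℝ) (θ : ℝ) (b : Ed d → ℝ) : ℝ :=
  sSup (bmoSet V θ b)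

/-- `b ∈ CMO(ρ)`: `b` lies in the closure of `C_c^∞(ℝ^d)` in the `BMO(ρ)` norm. -/
def MemCMOrho {d : ℕ} (V : Ed d → ℝ) (θ : ℝ) (b : Ed d → ℝ) : Prop :=
  ∀ ε : ℝ, 0 < ε → ∃ φ : Ed d → ℝ, ContDiff ℝ (⊤ : ℕ∞) φ ∧ HasCompactSupport φ ∧
    MemBMOrho V θ (b - φ) ∧ bmoNorm V θ (b - φ) < ε

/-- The weighted `L^p(w)` (quasi-)norm, as an `ℝ≥0∞`-valued quantity. -/
def wLpNorm {d : ℕ} (w : Ed d → ℝ) (p : ℝ) (f : Ed d → ℝ) : ℝ≥0∞ :=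
  (∫⁻ x, ENNReal.ofReal ‖f x‖ ^ p * ENNReal.ofReal (w x)) ^ (1 / p)

/-- The (unweighted) `L^p` norm, as an `ℝ≥0∞`-valued quantity. -/
def LpNormV {d : ℕ} (p : ℝ) (f : Ed d → ℝ) : ℝ≥0∞ :=
  (∫⁻ x, ENNReal.ofReal ‖f x‖ ^ p) ^ (1 / p)

/-- The commutator `[b, T] f = b · T f − T (b f)`. -/
def commOp {d : ℕ} (b : Ed d → ℝ) (T : (Ed d → ℝ) → Ed d → ℝ) (f : Ed d → ℝ) : Ed d → ℝ :=
  fun x => b x * T f x - T (fun y => b y * f y) x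

/-- The maximal truncated singular integral associated with the kernel `K`. -/
def maxTrunc {d : ℕ} (K : Ed d → Ed d → ℝ) (f : Ed d → ℝ) (x : Ed d) : ℝ≥0∞ :=
  ⨆ (ε : ℝ) (_ : 0 < ε), ENNReal.ofReal ‖∫ y in {y : Ed d | ε < dist x y}, K x y * f y‖

lemma fk_tri {p : ℝ} (hp : 0 < p) (a b : ℝ) :
    ‖a + b‖ₑ ^ p ≤ (2:ℝ≥0∞) ^ p * (‖a‖ₑ ^ p + ‖b‖ₑ ^ p) := by
  have h1 : ‖a + b‖ₑ ≤ 2 * max ‖a‖ₑ ‖b‖ₑ := by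
    refine (enorm_add_le a b).trans ?_
    rw [two_mul]
    exact add_le_add (le_max_left _ _) (le_max_right _ _)
  calc ‖a + b‖ₑ ^ p ≤ (2 * max ‖a‖ₑ ‖b‖ₑ) ^ p := ENNReal.rpow_le_rpow h1 hp.le
    _ = 2 ^ p * (max ‖a‖ₑ ‖b‖ₑ) ^ p := ENNReal.mul_rpow_of_nonneg _ _ hp.le
    _ ≤ _ := by
      gcongr
      rcases max_cases ‖a‖ₑ ‖b‖ₑ with h | h <;> rw [h.1]
      · exact le_self_add
      · exact le_add_self

lemma fk_dtri {α : Type*} [MeasurableSpace α] (μ : Measure α) {p : ℝ} (hp : 0 < p)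
    (f g h : α → ℝ) (hf : Measurable f) (hg : Measurable g) :
    ∫⁻ x, ‖f x - h x‖ₑ ^ p ∂μ ≤
      (2:ℝ≥0∞) ^ p * (∫⁻ x, ‖f x - g x‖ₑ ^ p ∂μ + ∫⁻ x, ‖g x - h x‖ₑ ^ p ∂μ) := by
  have hm : Measurable (fun x => ‖f x - g x‖ₑ ^ p) := by fun_prop
  rw [← lintegral_add_left hm, ← lintegral_const_mul']
  · refine lintegral_mono fun x => ?_
    have := fk_tri hp (f x - g x) (g x - h x)
    simpa using this
  · exact ENNReal.rpow_ne_top_of_nonneg hp.le (by simp)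

lemma fk_complete {α : Type*} [MeasurableSpace α] (μ : Measure α) {p : ℝ} (hp : 0 < p)
    (v : ℕ → α → ℝ) (hv : ∀ n, Measurable (v n))
    (hc : ∀ ε : ℝ≥0∞, 0 < ε → ∃ N, ∀ i ≥ N, ∀ j ≥ N, ∫⁻ x, ‖v i x - v j x‖ₑ ^ p ∂μ ≤ ε) :
    ∃ g : α → ℝ, Measurable g ∧
      Tendsto (fun n => ∫⁻ x, ‖v n x - g x‖ₑ ^ p ∂μ) atTop (nhds 0) := by
  have hq : ∀ n : ℕ, (0:ℝ≥0∞) < (1/4) ^ n := fun n => ENNReal.pow_pos (by simp) n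
  choose N hN using fun n : ℕ => hc ((1/4) ^ n) (hq n)
  obtain ⟨ψ, hψ, hψN⟩ : ∃ ψ : ℕ → ℕ, StrictMono ψ ∧ ∀ n, N n ≤ ψ n := by
    obtain ⟨ψ, h1, h2⟩ := Filter.extraction_forall_of_eventually'
      (P := fun n k => N n ≤ k) (fun n => ⟨N n, fun k hk => hk⟩)
    exact ⟨ψ, h1, h2⟩
  have hstep : ∀ n, ∫⁻ x, ‖v (ψ n) x - v (ψ (n+1)) x‖ₑ ^ p ∂μ ≤ (1/4) ^ n := fun n =>
    hN n _ (hψN n) _ ((hψN n).trans (hψ.monotone (Nat.le_succ n)))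
  have hsum : ∫⁻ x, ∑' n : ℕ, 2 ^ n * ‖v (ψ n) x - v (ψ (n+1)) x‖ₑ ^ p ∂μ ≠ ⊤ := by
    rw [lintegral_tsum (fun n => by have := hv (ψ n); have := hv (ψ (n+1)); fun_prop)]
    have : ∀ n : ℕ, ∫⁻ x, 2 ^ n * ‖v (ψ n) x - v (ψ (n+1)) x‖ₑ ^ p ∂μ ≤ (2⁻¹ : ℝ≥0∞) ^ n := by
      intro n
      rw [lintegral_const_mul' _ _ (by simp)]
      calc _ ≤ (2:ℝ≥0∞) ^ n * (1/4) ^ n := by gcongr; exact hstep n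
        _ = (2 * (1/4)) ^ n := by rw [mul_pow]
        _ = _ := by
          congr 1
          rw [show (4:ℝ≥0∞) = 2 * 2 by norm_num, one_div, ENNReal.mul_inv (by simp) (by simp),
            ← mul_assoc, ENNReal.mul_inv_cancel (by simp) (by simp), one_mul]
    refine ne_top_of_le_ne_top ?_ (ENNReal.tsum_le_tsum this)
    rw [ENNReal.tsum_geometric]
    simp
  have hae : ∀ᵐ x ∂μ, ∃ l : ℝ, Tendsto (fun n => v (ψ n) x) atTop (nhds l) := by
    have hmeas : Measurable fun x => ∑' n : ℕ, (2:ℝ≥0∞) ^ n * ‖v (ψ n) x - v (ψ (n+1)) x‖ₑ ^ p := by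
      refine Measurable.tsum (fun n => ?_)
      have := hv (ψ n); have := hv (ψ (n+1)); fun_prop
    filter_upwards [ae_lt_top hmeas hsum] with x hx
    obtain ⟨C, hC⟩ := ENNReal.lt_iff_exists_nnreal_btwn.1 hx
    apply cauchySeq_tendsto_of_complete
    have hr : (1/2:ℝ) ^ (1/p) < 1 := Real.rpow_lt_one (by norm_num) (by norm_num) (by positivity)
    refine cauchySeq_of_le_geometric ((1/2:ℝ) ^ (1/p)) ((C:ℝ) ^ (1/p)) hr (fun n => ?_)
    have h1 : (2:ℝ≥0∞) ^ n * ‖v (ψ n) x - v (ψ (n+1)) x‖ₑ ^ p ≤ C :=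
      (ENNReal.le_tsum n).trans hC.1.le
    have h2 : (2:ℝ) ^ n * |v (ψ n) x - v (ψ (n+1)) x| ^ p ≤ C := by
      have := ENNReal.toReal_mono (by simp) h1
      simpa [← ENNReal.toReal_rpow] using this
    rw [Real.dist_eq]
    have h3 : |v (ψ n) x - v (ψ (n+1)) x| ^ p ≤ C * (1/2) ^ n := by
      rw [one_div, inv_pow, ← div_eq_mul_inv, le_div_iff₀ (by positivity)]
      linarith
    have h4 := Real.rpow_le_rpow (by positivity) h3 (z := 1/p) (by positivity)
    rw [← Real.rpow_mul (abs_nonneg _), mul_one_div_cancel hp.ne', Real.rpow_one,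
      Real.mul_rpow (by positivity) (by positivity)] at h4
    refine h4.trans (le_of_eq ?_)
    rw [← Real.rpow_natCast, ← Real.rpow_natCast, ← Real.rpow_mul (by positivity),
      ← Real.rpow_mul (by positivity), mul_comm]
    ring_nf
  obtain ⟨g, hg, hlim⟩ := exists_stronglyMeasurable_limit_of_tendsto_ae
    (fun n => (hv (ψ n)).aestronglyMeasurable) hae
  refine ⟨g, hg.measurable, ?_⟩
  rw [ENNReal.tendsto_atTop_zero]
  intro ε hε
  obtain ⟨M, hM⟩ := hc ε hε
  refine ⟨M, fun n hn => ?_⟩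
  calc ∫⁻ x, ‖v n x - g x‖ₑ ^ p ∂μ
      = ∫⁻ x, liminf (fun k => ‖v n x - v (ψ k) x‖ₑ ^ p) atTop ∂μ := by
        refine lintegral_congr_ae ?_
        filter_upwards [hlim] with x hx
        have : Tendsto (fun k => ‖v n x - v (ψ k) x‖ₑ ^ p) atTop (nhds (‖v n x - g x‖ₑ ^ p)) :=
          (ENNReal.continuous_rpow_const.tendsto _).comp
            ((continuous_enorm.tendsto _).comp (tendsto_const_nhds.sub hx))
        exact this.liminf_eq.symm
    _ ≤ liminf (fun k => ∫⁻ x, ‖v n x - v (ψ k) x‖ₑ ^ p ∂μ) atTop := by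
        refine lintegral_liminf_le fun k => ?_
        have := hv n; have := hv (ψ k); fun_prop
    _ ≤ ε := by
        refine Filter.liminf_le_of_frequently_le' (Eventually.frequently ?_)
        filter_upwards [eventually_ge_atTop M] with k hk
        exact hM n hn _ (hk.trans (hψ.id_le k))

/-- half-open grid cell -/
def fkCell {d : ℕ} (s : ℝ) (k : Fin d → ℤ) : Set (Ed d) :=
  {x | ∀ j, x j ∈ Set.Ico (s * k j) (s * k j + s)}

def fkBox (d : ℕ) (s : ℝ) : Set (Ed d) := {x | ∀ j, x j ∈ Set.Ioo (-s) s}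

lemma fkCell_eq {d : ℕ} (s : ℝ) (k : Fin d → ℤ) : fkCell s k = (@WithLp.ofLp 2 (Fin d → ℝ)) ⁻¹'
    (Set.pi Set.univ fun j => Set.Ico (s * k j) (s * k j + s)) := by
  ext x; simp [fkCell]

lemma fkBox_eq {d : ℕ} (s : ℝ) : fkBox d s = (@WithLp.ofLp 2 (Fin d → ℝ)) ⁻¹'
    (Set.pi Set.univ fun _ => Set.Ioo (-s) s) := by
  ext x; simp [fkBox]

lemma fkCell_meas {d : ℕ} (s : ℝ) (k : Fin d → ℤ) : MeasurableSet (fkCell s k) := by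
  rw [fkCell_eq]
  exact (PiLp.volume_preserving_ofLp (Fin d)).measurable
    (MeasurableSet.univ_pi fun _ => measurableSet_Ico)

lemma fkBox_meas {d : ℕ} (s : ℝ) : MeasurableSet (fkBox d s) := by
  rw [fkBox_eq]
  exact (PiLp.volume_preserving_ofLp (Fin d)).measurable
    (MeasurableSet.univ_pi fun _ => measurableSet_Ioo)

lemma fkCell_vol {d : ℕ} (s : ℝ) (k : Fin d → ℤ) :
    volume (fkCell s k) = ENNReal.ofReal s ^ d := by
  rw [fkCell_eq, (PiLp.volume_preserving_ofLp (Fin d)).measure_preimage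
    (MeasurableSet.univ_pi fun _ => measurableSet_Ico).nullMeasurableSet, Real.volume_pi_Ico]
  simp

lemma fkBox_vol {d : ℕ} (s : ℝ) :
    volume (fkBox d s) = 2 ^ d * ENNReal.ofReal s ^ d := by
  rw [fkBox_eq, (PiLp.volume_preserving_ofLp (Fin d)).measure_preimage
    (MeasurableSet.univ_pi fun _ => measurableSet_Ioo).nullMeasurableSet, Real.volume_pi_Ioo]
  simp [← mul_pow, ← two_mul, ENNReal.ofReal_mul]

lemma fkCell_disj {d : ℕ} {s : ℝ} (hs : 0 < s) :
    Pairwise (Function.onFun Disjoint (fun k : Fin d → ℤ => fkCell s k)) := by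
  have key : ∀ (x : Ed d) (k : Fin d → ℤ), x ∈ fkCell s k → ∀ j, k j = ⌊x j / s⌋ := by
    intro x k hx j
    have := hx j
    symm
    rw [Int.floor_eq_iff]
    rw [le_div_iff₀ hs, div_lt_iff₀ hs]
    constructor <;> nlinarith [this.1, this.2]
  intro k l hkl
  refine Set.disjoint_left.2 fun x hx hx' => hkl ?_
  ext j
  rw [key x k hx, key x l hx']

lemma fkCell_sub {d : ℕ} {s : ℝ} (k : Fin d → ℤ) (x y : Ed d) (hx : x ∈ fkCell s k)
    (hy : y ∈ fkCell s k) : y - x ∈ fkBox d s := by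
  intro j
  have h1 := hx j
  have h2 := hy j
  simp only [PiLp.sub_apply, Set.mem_Ioo, Set.mem_Ico] at *
  constructor <;> linarith

lemma fkCell_cover {d : ℕ} {s : ℝ} (hs : 0 < s) (R : ℝ) :
    ∃ S : Finset (Fin d → ℤ), ∀ x : Ed d, ‖x‖ ≤ R → ∃ k ∈ S, x ∈ fkCell s k := by
  refine ⟨Finset.Icc (fun _ => ⌊-R / s⌋) (fun _ => ⌊R / s⌋), fun x hx => 
    ⟨fun j => ⌊x j / s⌋, ?_, ?_⟩⟩
  · have hj : ∀ j, |x j| ≤ R := fun j => (PiLp.norm_apply_le x j).trans hx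
    rw [Finset.mem_Icc]
    constructor <;> intro j <;> apply Int.floor_le_floor <;> 
      have := abs_le.1 (hj j) <;> gcongr
    · exact this.1
    · exact this.2
  · intro j
    have h1 := Int.floor_le (x j / s)
    have h2 := Int.lt_floor_add_one (x j / s)
    rw [le_div_iff₀ hs] at h1
    rw [div_lt_iff₀ hs] at h2
    constructor <;> nlinarith

lemma fkCell_bdd {d : ℕ} {s : ℝ} (k : Fin d → ℤ) : Bornology.IsBounded (fkCell s k) := by
  rw [fkCell_eq]
  have : Bornology.IsBounded (Set.pi Set.univ fun j => Set.Ico (s * k j) (s * k j + s)) :=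
    Bornology.IsBounded.pi fun j => isBounded_Ico _ _
  exact (PiLp.antilipschitzWith_ofLp 2 (fun _ : Fin d => ℝ)).isBounded_preimage this

/-- discretization -/
lemma fk_discr {d : ℕ} {s : ℝ} (hs : 0 < s) (μ : Measure (Ed d)) [SFinite μ] {p : ℝ}
    (f : Ed d → ℝ) (hf : Measurable f) (η : ℝ≥0∞)
    (hη : ∀ h ∈ fkBox d s, ∫⁻ x, ‖f (x + h) - f x‖ₑ ^ p ∂μ ≤ η) :
    ∃ c : (Fin d → ℤ) → ℝ, (∀ k, μ (fkCell s k) = 0 → c k = 0) ∧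
      ∑' k, ∫⁻ x in fkCell s k, ‖f x - c k‖ₑ ^ p ∂μ ≤ 2 ^ d * η := by
  have hv0 : ENNReal.ofReal s ^ d ≠ 0 := by simp [hs]
  have hvt : ENNReal.ofReal s ^ d ≠ ⊤ := by simp
  have hex : ∀ k : Fin d → ℤ, ∃ y ∈ fkCell s k, ∫⁻ x in fkCell s k, ‖f x - f y‖ₑ ^ p ∂μ ≤
      (∫⁻ x in fkCell s k, ∫⁻ h in fkBox d s, ‖f (x + h) - f x‖ₑ ^ p ∂volume ∂μ) / ENNReal.ofReal s ^ d := by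
    intro k
    have hjm : Measurable (fun z : Ed d × Ed d => ‖f z.2 - f z.1‖ₑ ^ p) := by fun_prop
    obtain ⟨y, hy, hle⟩ := exists_le_setLAverage (μ := volume) (s := fkCell s k)
      (f := fun y => ∫⁻ x in fkCell s k, ‖f x - f y‖ₑ ^ p ∂μ) (by rwa [fkCell_vol])
      (by rwa [fkCell_vol]) (Measurable.lintegral_prod_right' hjm).aemeasurable
    refine ⟨y, hy, hle.trans ?_⟩
    rw [setLAverage_eq, fkCell_vol]
    refine ENNReal.div_le_div_right ?_ _
    have hjm2 : Measurable (fun z : Ed d × Ed d => ‖f z.2 - f z.1‖ₑ ^ p) := by fun_prop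
    rw [lintegral_lintegral_swap hjm2.aemeasurable]
    refine setLIntegral_mono' (fkCell_meas s k) fun x hx => ?_
    rw [← lintegral_indicator (fkCell_meas s k), ← lintegral_indicator (fkBox_meas s),
      ← lintegral_add_left_eq_self _ x]
    refine lintegral_mono fun h => ?_
    by_cases hh : x + h ∈ fkCell s k
    · have h2 : h ∈ fkBox d s := by simpa using fkCell_sub k x (x + h) hx hh
      rw [Set.indicator_of_mem hh, Set.indicator_of_mem h2, ← enorm_neg, neg_sub]
    · rw [Set.indicator_of_notMem hh]; exact zero_le
  choose y hy hle using hex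
  classical
  refine ⟨fun k => if μ (fkCell s k) = 0 then 0 else f (y k), fun k hk => by simp [hk], ?_⟩
  have hjm3 : Measurable (fun z : Ed d × Ed d => ‖f (z.1 + z.2) - f z.1‖ₑ ^ p) := by fun_prop
  calc ∑' k, ∫⁻ x in fkCell s k, ‖f x - (if μ (fkCell s k) = 0 then 0 else f (y k))‖ₑ ^ p ∂μ
      ≤ ∑' k : Fin d → ℤ, (∫⁻ x in fkCell s k, ∫⁻ h in fkBox d s, ‖f (x + h) - f x‖ₑ ^ p ∂volume ∂μ) /
          ENNReal.ofReal s ^ d := by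
        refine ENNReal.tsum_le_tsum fun k => ?_
        by_cases h0 : μ (fkCell s k) = 0
        · rw [setLIntegral_measure_zero _ _ h0]; exact zero_le
        · simp only [h0, if_false]; exact hle k
    _ = (∫⁻ x in ⋃ k : Fin d → ℤ, fkCell s k,
          ∫⁻ h in fkBox d s, ‖f (x + h) - f x‖ₑ ^ p ∂volume ∂μ) / ENNReal.ofReal s ^ d := by
        simp only [div_eq_mul_inv]
        rw [ENNReal.tsum_mul_right, lintegral_iUnion (fkCell_meas s) (fkCell_disj hs)]
    _ ≤ (∫⁻ x, ∫⁻ h in fkBox d s, ‖f (x + h) - f x‖ₑ ^ p ∂volume ∂μ) / ENNReal.ofReal s ^ d :=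
        ENNReal.div_le_div_right (setLIntegral_le_lintegral _ _) _
    _ = (∫⁻ h in fkBox d s, ∫⁻ x, ‖f (x + h) - f x‖ₑ ^ p ∂μ) / ENNReal.ofReal s ^ d := by
        rw [lintegral_lintegral_swap hjm3.aemeasurable]
    _ ≤ (∫⁻ h in fkBox d s, η) / ENNReal.ofReal s ^ d :=
        ENNReal.div_le_div_right (setLIntegral_mono' (fkBox_meas s) hη) _
    _ = 2 ^ d * η := by
        rw [setLIntegral_const, fkBox_vol, ← mul_assoc, mul_comm η,
          ENNReal.mul_div_cancel_right hv0 hvt]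

lemma fk_main {d : ℕ} (μ : Measure (Ed d)) [SFinite μ] {p : ℝ} (hp : 0 < p)
    (hfin : ∀ s k, μ (fkCell (d := d) s k) ≠ ⊤)
    (u : ℕ → Ed d → ℝ) (hu : ∀ n, Measurable (u n))
    (M : ℝ≥0∞) (hM : M ≠ ⊤) (hb : ∀ n, ∫⁻ x, ‖u n x‖ₑ ^ p ∂μ ≤ M)
    (hvan : ∀ ε : ℝ≥0∞, 0 < ε → ∃ R : ℝ, ∀ n, ∫⁻ x in {x | R < ‖x‖}, ‖u n x‖ₑ ^ p ∂μ ≤ ε)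
    (hequi : ∀ ε : ℝ≥0∞, 0 < ε → ∃ s : ℝ, 0 < s ∧ ∀ n, ∀ h ∈ fkBox d s,
      ∫⁻ x, ‖u n (x + h) - u n x‖ₑ ^ p ∂μ ≤ ε) :
    ∃ φ : ℕ → ℕ, StrictMono φ ∧ ∀ ε : ℝ≥0∞, 0 < ε → ∃ N, ∀ i ≥ N, ∀ j ≥ N,
      ∫⁻ x, ‖u (φ i) x - u (φ j) x‖ₑ ^ p ∂μ ≤ ε := by
  set K : ℝ≥0∞ := (2:ℝ≥0∞) ^ p with hK
  have hKt : K ≠ ⊤ := ENNReal.rpow_ne_top_of_nonneg hp.le (by simp)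
  choose s hs0 hs using fun m : ℕ => hequi ((m + 1 : ℕ) : ℝ≥0∞)⁻¹ (by simp)
  choose c hc0 hc using fun (m n : ℕ) => fk_discr (hs0 m) μ (u n) (hu n) _ (hs m n)
  -- coefficient bounds
  have hB : ∀ q : ℕ × (Fin d → ℤ), ∃ B : ℝ, ∀ n, c q.1 n q.2 ∈ Set.Icc (-B) B := by
    rintro ⟨m, k⟩
    by_cases h0 : μ (fkCell (s m) k) = 0
    · exact ⟨0, fun n => by simp [hc0 m n k h0]⟩
    set T : ℝ≥0∞ := (K * (M + 2 ^ d * ((m + 1 : ℕ) : ℝ≥0∞)⁻¹)) / μ (fkCell (s m) k)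
    have hT : T ≠ ⊤ := by
      refine ENNReal.div_ne_top (ENNReal.mul_ne_top hKt (ENNReal.add_ne_top.2 ⟨hM, ?_⟩)) h0
      exact ENNReal.mul_ne_top (by simp) (by simp)
    refine ⟨(T ^ (1/p)).toReal, fun n => ?_⟩
    have h1 : ‖c m n k‖ₑ ^ p ≤ T := by
      rw [ENNReal.le_div_iff_mul_le (Or.inl h0) (Or.inl (hfin _ _)), ← setLIntegral_const]
      have := fk_dtri (μ.restrict (fkCell (s m) k)) hp (fun _ => 0) (u n) (fun _ => c m n k)
        measurable_const (hu n)
      simp only [zero_sub, enorm_neg] at this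
      refine this.trans ?_
      gcongr
      · exact (setLIntegral_le_lintegral _ _).trans (hb n)
      · exact (ENNReal.le_tsum k).trans (hc m n)
    have h2 : ‖c m n k‖ₑ ≤ T ^ (1/p) := by
      rw [one_div, ENNReal.le_rpow_inv_iff hp]; exact h1
    have h3 := ENNReal.toReal_mono (ENNReal.rpow_ne_top_of_nonneg (by positivity) hT) h2
    rw [toReal_enorm, Real.norm_eq_abs] at h3
    exact abs_le.1 h3
  choose B hB using hB
  obtain ⟨a, -, φ, hφ, ha⟩ := (isCompact_univ_pi (fun q => isCompact_Icc (a := -B q) (b := B q))).tendsto_subseq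
    (x := fun n q => c q.1 n q.2) (fun n q _ => hB q n)
  rw [tendsto_pi_nhds] at ha
  refine ⟨φ, hφ, fun ε hε => ?_⟩
  -- auxiliary bound
  have bound : ∀ (m : ℕ) (R : ℝ) (S : Finset (Fin d → ℤ)), 
      (∀ x : Ed d, ‖x‖ ≤ R → ∃ k ∈ S, x ∈ fkCell (s m) k) → ∀ τ : ℝ≥0∞,
      (∀ n, ∫⁻ x in {x | R < ‖x‖}, ‖u n x‖ₑ ^ p ∂μ ≤ τ) → ∀ i j : ℕ,
      ∫⁻ x, ‖u i x - u j x‖ₑ ^ p ∂μ ≤ K * (τ + τ) + (K * (2 ^ d * ((m + 1 : ℕ) : ℝ≥0∞)⁻¹) +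
        K * (K * (∑ k ∈ S, ‖c m i k - c m j k‖ₑ ^ p * μ (fkCell (s m) k) +
          2 ^ d * ((m + 1 : ℕ) : ℝ≥0∞)⁻¹))) := by
    intro m R S hS τ hτ i j
    have hcov : (Set.univ : Set (Ed d)) ⊆ {x | R < ‖x‖} ∪ ⋃ k ∈ S, fkCell (s m) k := by
      intro x _
      by_cases hx : R < ‖x‖
      · exact Or.inl hx
      · obtain ⟨k, hk, hxk⟩ := hS x (not_lt.1 hx)
        exact Or.inr (Set.mem_biUnion hk hxk)
    rw [← setLIntegral_univ]
    refine (lintegral_mono_set hcov).trans ((lintegral_union_le _ _ _).trans (add_le_add ?_ ?_))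
    · have := fk_dtri (μ.restrict {x | R < ‖x‖}) hp (u i) (fun _ => 0) (u j) (hu i) measurable_const
      simp only [zero_sub, sub_zero, enorm_neg] at this
      refine this.trans ?_
      gcongr
      · exact hτ i
      · exact hτ j
    · rw [lintegral_biUnion_finset (fun k _ l _ hkl => fkCell_disj (hs0 m) hkl)
        (fun k _ => fkCell_meas _ k)]
      have hsumle : ∀ n, ∑ k ∈ S, ∫⁻ x in fkCell (s m) k, ‖u n x - c m n k‖ₑ ^ p ∂μ ≤
          2 ^ d * ((m + 1 : ℕ) : ℝ≥0∞)⁻¹ := fun n =>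
        (ENNReal.sum_le_tsum S).trans (hc m n)
      calc ∑ k ∈ S, ∫⁻ x in fkCell (s m) k, ‖u i x - u j x‖ₑ ^ p ∂μ
          ≤ ∑ k ∈ S, (K * (∫⁻ x in fkCell (s m) k, ‖u i x - c m i k‖ₑ ^ p ∂μ) +
            K * (K * (‖c m i k - c m j k‖ₑ ^ p * μ (fkCell (s m) k) +
              ∫⁻ x in fkCell (s m) k, ‖u j x - c m j k‖ₑ ^ p ∂μ))) := by
            refine Finset.sum_le_sum fun k _ => ?_
            rw [← mul_add]
            refine (fk_dtri _ hp (u i) (fun _ => c m i k) (u j) (hu i) measurable_const).trans ?_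
            rw [← hK]
            gcongr
            refine (fk_dtri _ hp (fun _ => c m i k) (fun _ => c m j k) (u j) measurable_const
              measurable_const).trans ?_
            rw [← hK, setLIntegral_const]
            gcongr with x
            rw [← enorm_neg, neg_sub]
        _ = K * (∑ k ∈ S, ∫⁻ x in fkCell (s m) k, ‖u i x - c m i k‖ₑ ^ p ∂μ) +
            K * (K * (∑ k ∈ S, ‖c m i k - c m j k‖ₑ ^ p * μ (fkCell (s m) k) +
              ∑ k ∈ S, ∫⁻ x in fkCell (s m) k, ‖u j x - c m j k‖ₑ ^ p ∂μ)) := by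
            simp only [Finset.sum_add_distrib, ← Finset.mul_sum]
        _ ≤ _ := by
            gcongr
            · exact hsumle i
            · exact hsumle j
  -- choose parameters
  have hε4 : (0:ℝ≥0∞) < ε / 4 := ENNReal.div_pos hε.ne' (by simp)
  have hsm : ∀ C : ℝ≥0∞, C ≠ ⊤ → ∃ m : ℕ, C * ((m + 1 : ℕ) : ℝ≥0∞)⁻¹ ≤ ε / 4 := by
    intro C hC
    have h1 : Tendsto (fun m : ℕ => C * ((m + 1 : ℕ) : ℝ≥0∞)⁻¹) atTop (nhds (C * 0)) :=
      ENNReal.Tendsto.const_mul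
        (ENNReal.tendsto_inv_nat_nhds_zero.comp (tendsto_add_atTop_nat 1)) (Or.inr hC)
    rw [mul_zero] at h1
    exact ((ENNReal.tendsto_nhds_zero.1 h1 _ hε4).exists)
  obtain ⟨m, hm⟩ := hsm (K * 2 ^ d + K * (K * 2 ^ d)) (by finiteness)
  obtain ⟨m', hm'⟩ := hsm (K * 2) (by finiteness)
  obtain ⟨R, hR⟩ := hvan ((m' + 1 : ℕ) : ℝ≥0∞)⁻¹ (by simp)
  obtain ⟨S, hS⟩ := fkCell_cover (d := d) (hs0 m) R
  have hlim : Tendsto (fun ij : ℕ × ℕ => K * (K * ∑ k ∈ S, ‖c m (φ ij.1) k - c m (φ ij.2) k‖ₑ ^ p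
      * μ (fkCell (s m) k))) (atTop ×ˢ atTop) (nhds 0) := by
    have hterm : ∀ k ∈ S, Tendsto (fun ij : ℕ × ℕ => ‖c m (φ ij.1) k - c m (φ ij.2) k‖ₑ ^ p
      * μ (fkCell (s m) k)) (atTop ×ˢ atTop) (nhds 0) := by
      intro k _
      have h1 := ha (m, k)
      have h2 : Tendsto (fun ij : ℕ × ℕ => c m (φ ij.1) k - c m (φ ij.2) k) (atTop ×ˢ atTop)
          (nhds (a (m,k) - a (m,k))) := (h1.comp tendsto_fst).sub (h1.comp tendsto_snd)
      have h3 : Tendsto (fun ij : ℕ × ℕ => ‖c m (φ ij.1) k - c m (φ ij.2) k‖ₑ ^ p)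
        (atTop ×ˢ atTop) (nhds (‖a (m,k) - a (m,k)‖ₑ ^ p)) :=
        (ENNReal.continuous_rpow_const.tendsto _).comp ((continuous_enorm.tendsto _).comp h2)
      have h4 := ENNReal.Tendsto.mul_const h3 (Or.inr (hfin (s m) k))
      simpa [hp] using h4
    have h5 := tendsto_finsetSum S hterm
    have h6 := ENNReal.Tendsto.const_mul (ENNReal.Tendsto.const_mul h5 (Or.inr hKt)) (Or.inr hKt)
    simpa using h6
  have hev := ENNReal.tendsto_nhds_zero.1 hlim _ hε4
  rw [prod_atTop_atTop_eq, eventually_atTop] at hev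
  obtain ⟨⟨N₁, N₂⟩, hN⟩ := hev
  refine ⟨max N₁ N₂, fun i hi j hj => ?_⟩
  have hij := hN (i, j) ⟨(le_max_left _ _).trans hi, (le_max_right _ _).trans hj⟩
  refine (bound m R S hS _ hR (φ i) (φ j)).trans ?_
  calc _ = K * 2 * ((m' + 1 : ℕ) : ℝ≥0∞)⁻¹ +
        ((K * 2 ^ d + K * (K * 2 ^ d)) * ((m + 1 : ℕ) : ℝ≥0∞)⁻¹ +
        K * (K * ∑ k ∈ S, ‖c m (φ i) k - c m (φ j) k‖ₑ ^ p * μ (fkCell (s m) k))) := by ring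
    _ ≤ ε / 4 + (ε / 4 + ε / 4) := by gcongr
    _ ≤ ε / 4 + (ε / 4 + ε / 4) + ε / 4 := le_self_add
    _ = 4 * (ε / 4) := by ring
    _ = ε := ENNReal.mul_div_cancel (by simp) (by simp)

/-- Weighted Fréchet–Kolmogorov theorem (Xue–Yabuta–Yan): boundedness, uniform vanishing at
infinity and uniform equicontinuity imply sequential compactness in `L^p(w)`. -/
theorem statement10 (d : ℕ) (hd : 1 ≤ d) (p₀ : ℝ) (hp₀ : 1 < p₀)
    (w : Ed d → ℝ) (hw0 : ∀ x, 0 ≤ w x) (hwloc : LocallyIntegrable w volume)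
    (hw'loc : LocallyIntegrable (fun x => w x ^ (-(1 / (p₀ - 1)))) volume)
    (p : ℝ) (hp : 0 < p) (F : Set (Ed d → ℝ))
    (hFmeas : ∀ f ∈ F, AEStronglyMeasurable f volume)
    (hFbdd : ∃ M : ℝ≥0∞, M < ⊤ ∧ ∀ f ∈ F,
      (∫⁻ x, ENNReal.ofReal (‖f x‖ ^ p * w x)) ≤ M)
    (hFvanish : Tendsto
      (fun N : ℝ => ⨆ f ∈ F, ∫⁻ x in {x : Ed d | N < ‖x‖},
        ENNReal.ofReal (‖f x‖ ^ p * w x)) atTop (nhds 0))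
    (hFequi : Tendsto
      (fun h : Ed d => ⨆ f ∈ F, ∫⁻ x,
        ENNReal.ofReal (‖f (x + h) - f x‖ ^ p * w x)) (nhds 0) (nhds 0)) :
    ∀ u : ℕ → Ed d → ℝ, (∀ n, u n ∈ F) →
      ∃ (φ : ℕ → ℕ) (g : Ed d → ℝ), StrictMono φ ∧
        AEStronglyMeasurable g volume ∧
        (∫⁻ x, ENNReal.ofReal (‖g x‖ ^ p * w x)) < ⊤ ∧
        Tendsto (fun n => ∫⁻ x, ENNReal.ofReal (‖u (φ n) x - g x‖ ^ p * w x))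
          atTop (nhds 0) := by

  intro u huF
  set ρ : Ed d → ℝ≥0∞ := fun x => ENNReal.ofReal (w x) with hρ
  have hρm : AEMeasurable ρ volume := hwloc.aestronglyMeasurable.aemeasurable.ennreal_ofReal
  set μ : Measure (Ed d) := volume.withDensity ρ with hμ
  have conv : ∀ (f : Ed d → ℝ) (s : Set (Ed d)), 
      ∫⁻ x in s, ENNReal.ofReal (‖f x‖ ^ p * w x) = ∫⁻ x in s, ‖f x‖ₑ ^ p ∂μ := by
    intro f s
    rw [hμ, setLIntegral_withDensity_eq_setLIntegral_mul_non_measurable₀' _ _ hρm.restrict _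
      (by filter_upwards with x; simp [hρ])]
    refine lintegral_congr fun x => ?_
    rw [Pi.mul_apply, ENNReal.ofReal_mul (by positivity), mul_comm,
      ← ENNReal.ofReal_rpow_of_nonneg (norm_nonneg _) hp.le, ofReal_norm]
  have conv' : ∀ (f : Ed d → ℝ), 
      ∫⁻ x, ENNReal.ofReal (‖f x‖ ^ p * w x) = ∫⁻ x, ‖f x‖ₑ ^ p ∂μ := by
    intro f
    simpa using conv f Set.univ
  have hac : μ ≪ volume := withDensity_absolutelyContinuous _ _
  have hum := fun n => (hFmeas (u n) (huF n)).aemeasurable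
  set v : ℕ → Ed d → ℝ := fun n => (hum n).mk (u n) with hv
  have hvm : ∀ n, Measurable (v n) := fun n => (hum n).measurable_mk
  have huv : ∀ n, u n =ᵐ[volume] v n := fun n => (hum n).ae_eq_mk
  have huvμ : ∀ n, u n =ᵐ[μ] v n := fun n => hac.ae_le (huv n)
  have hvu : ∀ n s, ∫⁻ x in s, ‖v n x‖ₑ ^ p ∂μ = ∫⁻ x in s, ‖u n x‖ₑ ^ p ∂μ := by
    intro n s
    refine lintegral_congr_ae (ae_restrict_of_ae ?_)
    filter_upwards [huvμ n] with x hx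
    rw [hx]
  have hvu' : ∀ n, ∫⁻ x, ‖v n x‖ₑ ^ p ∂μ = ∫⁻ x, ‖u n x‖ₑ ^ p ∂μ := by
    intro n
    simpa using hvu n Set.univ
  have hfin : ∀ s k, μ (fkCell (d := d) s k) ≠ ⊤ := by
    intro s k
    rw [hμ, withDensity_apply _ (fkCell_meas s k)]
    have hcpt : IsCompact (closure (fkCell (d := d) s k)) := (fkCell_bdd k).isCompact_closure
    have hint := (hwloc.integrableOn_isCompact hcpt).mono_set subset_closure
    exact hint.lintegral_lt_top.ne
  obtain ⟨M, hMt, hM⟩ := hFbdd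
  obtain ⟨φ, hφ, hcau⟩ := fk_main μ hp hfin v hvm M hMt.ne
    (fun n => by
      rw [hvu', ← conv']
      exact hM _ (huF n))
    (fun ε hε => by
      obtain ⟨R, hR⟩ := (ENNReal.tendsto_nhds_zero.1 hFvanish ε hε).exists
      refine ⟨R, fun n => ?_⟩
      rw [hvu, ← conv]
      exact (le_iSup₂ (f := fun f (_ : f ∈ F) => ∫⁻ x in {x : Ed d | R < ‖x‖},
        ENNReal.ofReal (‖f x‖ ^ p * w x)) (u n) (huF n)).trans hR)
    (fun ε hε => by
      have h1 := ENNReal.tendsto_nhds_zero.1 hFequi ε hε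
      obtain ⟨r, hr, hball⟩ := Metric.eventually_nhds_iff.1 h1
      have hd0 : (0:ℝ) < d := by exact_mod_cast hd
      refine ⟨r / (2 * d), by positivity, fun n h hh => ?_⟩
      have hnorm : dist h 0 < r := by
        rw [dist_zero_right]
        have h2 : ‖h‖ ≤ ∑ j, ‖h j‖ := by
          rw [EuclideanSpace.norm_eq]
          refine Real.sqrt_le_iff.2 ⟨by positivity, ?_⟩
          exact Finset.sum_sq_le_sq_sum_of_nonneg (fun j _ => norm_nonneg _)
        have h3 : ∑ j, ‖h j‖ ≤ ∑ j : Fin d, r / (2 * d) :=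
          Finset.sum_le_sum fun j _ => (abs_lt.2 (hh j)).le
        have h4 : ∑ j : Fin d, r / (2 * d) = r / 2 := by
          simp; field_simp
        linarith
      have h5 : (fun x => u n (x + h)) =ᵐ[volume] fun x => v n (x + h) :=
        (measurePreserving_add_right volume h).quasiMeasurePreserving.ae_eq_comp (huv n)
      have h6 : ∫⁻ x, ‖v n (x + h) - v n x‖ₑ ^ p ∂μ = ∫⁻ x, ‖u n (x + h) - u n x‖ₑ ^ p ∂μ := by
        refine lintegral_congr_ae ?_
        filter_upwards [huvμ n, hac.ae_le h5] with x hx1 hx2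
        rw [hx1, hx2]
      rw [h6, ← conv' (fun x => u n (x + h) - u n x)]
      exact (le_iSup₂ (f := fun f (_ : f ∈ F) => ∫⁻ x, 
        ENNReal.ofReal (‖f (x + h) - f x‖ ^ p * w x)) (u n) (huF n)).trans (hball hnorm))
  obtain ⟨g, hg, hlim⟩ := fk_complete μ hp (fun n => v (φ n)) (fun n => hvm _) hcau
  refine ⟨φ, g, hφ, hg.aestronglyMeasurable, ?_, ?_⟩
  · rw [conv']
    obtain ⟨n, hn⟩ := (ENNReal.tendsto_nhds_zero.1 hlim 1 one_pos).exists
    have h1 := fk_dtri μ hp (fun _ => 0) (v (φ n)) g measurable_const (hvm _)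
    simp only [zero_sub, enorm_neg] at h1
    refine h1.trans_lt (ENNReal.mul_lt_top (ENNReal.rpow_lt_top_of_nonneg hp.le (by simp)) ?_)
    refine ENNReal.add_lt_top.2 ⟨?_, hn.trans_lt one_lt_top⟩
    rw [hvu', ← conv']
    exact (hM _ (huF _)).trans_lt hMt
  · refine hlim.congr fun n => ?_
    rw [conv' (fun x => u (φ n) x - g x)]
    refine lintegral_congr_ae ?_
    filter_upwards [huvμ (φ n)] with x hx
    rw [hx]
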